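/- arXiv:2408.09247 — 2 statements merged into one kernel-verified Lean document; each statement's English description precedes it below -/
import Mathlib

section
/- Let G be a loopless connected multigraph with ordered vertices v_0,...,v_n, let Δ be its Laplacian matrix, and let Δ̃ be obtained from Δ by deleting the row and column of v_0. Then for 1 ≤ i, j ≤ n, the (i,j) entry of Δ̃⁻¹ equals κ_{i,j}(G)/κ(G), where κ(G) is the number of spanning trees of G and κ_{i,j}(G) is the number of 2-component spanning forests of G in which one component contains v_0 and the other contains both v_i and v_j. -/
/-- Reachability in the multigraph with edge set `E`, endpoint map `ends`, using only the
edges in the subset `S`. -/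
def MGReach {V E : Type*} (ends : E → Sym2 V) (S : Finset E) (u v : V) : Prop :=
  Relation.ReflTransGen (fun a b => ∃ e ∈ S, ends e = s(a, b)) u v

/-- The number of spanning trees of the multigraph: subsets of edges of cardinality
`|V| - 1` for which every pair of vertices is connected. -/
noncomputable def MGKappa {V E : Type*} [Fintype V] [Fintype E] (ends : E → Sym2 V) : ℕ :=
  Nat.card {S : Finset E // S.card = Fintype.card V - 1 ∧ ∀ u v, MGReach ends S u v}

/-- The number of 2-component spanning forests in which one component contains `v0` and the
other contains both `vi` and `vj`. -/
noncomputable def MGKappaTwo {V E : Type*} [Fintype V] [Fintype E] (ends : E → Sym2 V)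
    (v0 vi vj : V) : ℕ :=
  Nat.card {S : Finset E // S.card = Fintype.card V - 2 ∧
    MGReach ends S vi vj ∧ ¬ MGReach ends S v0 vi ∧
    ∀ w, MGReach ends S w v0 ∨ MGReach ends S w vi}

open scoped Classical in
/-- The indicator of reachability inside the edge set `S`. -/
noncomputable def MGReach.ind {V E : Type*} (ends : E → Sym2 V) (S : Finset E) (u v : V) : ℚ :=
  if MGReach ends S u v then 1 else 0

namespace MGReach

variable {V E : Type*} {ends : E → Sym2 V} {S T : Finset E} {u v w : V}

theorem refl (u : V) : MGReach ends S u u := Relation.ReflTransGen.refl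

theorem symm (h : MGReach ends S u v) : MGReach ends S v u := by
  induction h with
  | refl => exact refl _
  | tail _ h ih =>
    obtain ⟨e, he, h⟩ := h
    exact Relation.ReflTransGen.head ⟨e, he, h.trans Sym2.eq_swap⟩ ih

theorem trans (h : MGReach ends S u v) (h' : MGReach ends S v w) : MGReach ends S u w :=
  Relation.ReflTransGen.trans h h'

theorem mono (hST : S ⊆ T) (h : MGReach ends S u v) : MGReach ends T u v :=
  Relation.ReflTransGen.mono (fun _ _ ⟨e, he, h⟩ => ⟨e, hST he, h⟩) _ _ h

theorem of_edge {e : E} (he : e ∈ S) (h : ends e = s(u, v)) : MGReach ends S u v :=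
  Relation.ReflTransGen.single ⟨e, he, h⟩

theorem of_edge_of_mem {e : E} (he : e ∈ S) (hu : u ∈ ends e) (hv : v ∈ ends e) :
    MGReach ends S u v := by
  by_cases huv : u = v
  · exact huv ▸ refl u
  · exact of_edge he ((Sym2.mem_and_mem_iff huv).1 ⟨hu, hv⟩)

open scoped Classical in
theorem reach_or_reach_of_insert {e : E} {a b : V} (hab : ends e = s(a, b))
    (h : MGReach ends (insert e S) u a) : MGReach ends S u a ∨ MGReach ends S u b := by
  induction h using Relation.ReflTransGen.head_induction_on with
  | refl => exact Or.inl (refl _)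
  | head h _ ih =>
    obtain ⟨f, hf, h⟩ := h
    rcases Finset.mem_insert.1 hf with rfl | hf
    · have := hab.symm.trans h
      rw [Sym2.eq_iff] at this
      rcases this with ⟨rfl, rfl⟩ | ⟨rfl, rfl⟩
      · exact Or.inl (refl _)
      · exact Or.inr (refl _)
    · exact ih.imp (of_edge hf h).trans (of_edge hf h).trans

open scoped Classical in
theorem insert_connected_iff {e : E} {a b : V} (hab : ends e = s(a, b)) :
    (∀ u v, MGReach ends (insert e S) u v) ↔ ∀ u, MGReach ends S u a ∨ MGReach ends S u b := by
  refine ⟨fun h u => reach_or_reach_of_insert hab (h u a), fun h => ?_⟩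
  have key : ∀ u, MGReach ends (insert e S) u a := fun u => (h u).elim
    (mono (Finset.subset_insert e S)) fun hb => (hb.mono (Finset.subset_insert e S)).trans
      (of_edge (Finset.mem_insert_self e S) hab).symm
  exact fun u v => (key u).trans (key v).symm

theorem reachable_fromEdgeSet (h : MGReach ends S u v) :
    (SimpleGraph.fromEdgeSet (ends '' (S : Set E))).Reachable u v := by
  induction h with
  | refl => exact SimpleGraph.Reachable.refl _
  | @tail b c _ h ih =>
    obtain ⟨e, he, h⟩ := h
    refine ih.trans ?_
    by_cases hbc : b = c
    · exact hbc ▸ SimpleGraph.Reachable.refl _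
    · exact SimpleGraph.Adj.reachable
        ((SimpleGraph.fromEdgeSet_adj _).2 ⟨⟨e, he, h⟩, hbc⟩)

/-- A connected multigraph on `V` has at least `|V| - 1` edges. -/
theorem card_le_card_add_one [Fintype V] [Nonempty V] (h : ∀ u v, MGReach ends S u v) :
    Fintype.card V ≤ S.card + 1 := by
  have hc : (SimpleGraph.fromEdgeSet (ends '' (S : Set E))).Connected :=
    ⟨fun u v => (h u v).reachable_fromEdgeSet⟩
  have h1 := hc.card_vert_le_card_edgeSet_add_one
  have h2 : (SimpleGraph.fromEdgeSet (ends '' (S : Set E))).edgeSet.ncard ≤ S.card := by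
    calc _ ≤ (ends '' (S : Set E)).ncard :=
          Set.ncard_le_ncard (by simp [SimpleGraph.edgeSet_fromEdgeSet]) (S.finite_toSet.image _)
      _ ≤ (S : Set E).ncard := Set.ncard_image_le S.finite_toSet
      _ = S.card := Set.ncard_coe_finset S
  rw [Nat.card_eq_fintype_card] at h1
  exact h1.trans (Nat.add_le_add_right h2 1)

/-- From a connected multigraph one can extract a spanning tree. -/
theorem exists_spanning_tree [Fintype V] [Nonempty V] (h : ∀ u v, MGReach ends S u v) :
    ∃ T : Finset E, T.card = Fintype.card V - 1 ∧ ∀ u v, MGReach ends T u v := by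
  classical
  have hc : (SimpleGraph.fromEdgeSet (ends '' (S : Set E))).Connected :=
    ⟨fun u v => (h u v).reachable_fromEdgeSet⟩
  obtain ⟨H, hle, hH⟩ := hc.exists_isTree_le
  have hpre : ∀ x : H.edgeSet, ∃ e, ends e = x := fun x => by
    have := SimpleGraph.edgeSet_mono hle x.2
    rw [SimpleGraph.edgeSet_fromEdgeSet] at this
    obtain ⟨e, -, he⟩ := this.1
    exact ⟨e, he⟩
  choose g hg using hpre
  have hinj : Function.Injective g := fun x y hxy =>
    Subtype.ext ((hg x).symm.trans ((congrArg ends hxy).trans (hg y)))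
  refine ⟨Finset.univ.image g, ?_, fun u v => ?_⟩
  · rw [Finset.card_image_of_injective _ hinj, Finset.card_univ, ← hH.card_edgeFinset,
      SimpleGraph.edgeFinset_card]
    rfl
  · obtain ⟨p⟩ := hH.connected.preconnected u v
    induction p with
    | nil => exact refl _
    | cons hadj _ ih =>
      exact (of_edge (Finset.mem_image_of_mem g (Finset.mem_univ ⟨_, hadj⟩)) (hg _)).trans ih

open scoped Classical in
/-- In a spanning tree `T`, exactly one edge at `i` separates `i` from a given `x ≠ i`. -/
theorem existsUnique_separating_edge [Fintype V] {i x : V} (hx : x ≠ i)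
    (hcard : T.card = Fintype.card V - 1) (hT : ∀ u v, MGReach ends T u v) :
    ∃! e, e ∈ T ∧ i ∈ ends e ∧ ¬ MGReach ends (T.erase e) x i := by
  have : Nonempty V := ⟨i⟩
  obtain ⟨w, e, he, hew, hw⟩ : ∃ w e, e ∈ T ∧ ends e = s(w, i) ∧
      MGReach ends (T.filter fun f => i ∉ ends f) x w := by
    have key : ∀ y, MGReach ends T y i → y = i ∨ ∃ w e, e ∈ T ∧ ends e = s(w, i) ∧
        MGReach ends (T.filter fun f => i ∉ ends f) y w := by
      intro y h
      induction h using Relation.ReflTransGen.head_induction_on with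
      | refl => exact Or.inl rfl
      | @head a c h _ ih =>
        obtain ⟨f, hf, h⟩ := h
        by_cases hai : a = i
        · exact Or.inl hai
        rcases ih with rfl | ⟨w, e, he, hew, hw⟩
        · exact Or.inr ⟨a, f, hf, h, refl _⟩
        · by_cases hci : c = i
          · exact Or.inr ⟨a, f, hf, hci ▸ h, refl _⟩
          · refine Or.inr ⟨w, e, he, hew, (of_edge (Finset.mem_filter.2 ⟨hf, ?_⟩) h).trans hw⟩
            rw [h, Sym2.mem_iff]
            exact fun h => h.elim (fun h => hai h.symm) fun h => hci h.symm
    exact (key x (hT x i)).resolve_left hx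
  have hsub : ∀ f, i ∈ ends f → (T.filter fun f => i ∉ ends f) ⊆ T.erase f := fun f hf g hg => by
    rw [Finset.mem_filter] at hg
    exact Finset.mem_erase.2 ⟨fun h => hg.2 (h ▸ hf), hg.1⟩
  have hie : i ∈ ends e := hew ▸ Sym2.mem_mk_right w i
  refine ⟨e, ⟨he, hie, fun hxi => ?_⟩, fun f ⟨_, hif, hfx⟩ => ?_⟩
  · have hwi : MGReach ends (T.erase e) w i := (hw.mono (hsub e hie)).symm.trans hxi
    have hall : ∀ u, MGReach ends (T.erase e) u i := fun u => by
      have h := (insert_connected_iff (S := T.erase e) hew).1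
        (by rwa [Finset.insert_erase he]) u
      exact h.elim (fun h => h.trans hwi) id
    have h1 := card_le_card_add_one fun u v => (hall u).trans (hall v).symm
    have h2 := Finset.card_erase_add_one he
    have : 0 < Fintype.card V := Fintype.card_pos
    omega
  · by_contra hne
    exact hfx ((hw.mono (hsub f hif)).trans
      (of_edge (Finset.mem_erase.2 ⟨fun h => hne h.symm, he⟩) hew))

open scoped Classical in
theorem sum_one_sub_ind [Fintype V] [DecidableEq V] (i x : V)
    (hcard : T.card = Fintype.card V - 1) (hT : ∀ u v, MGReach ends T u v) :
    ∑ e ∈ T with i ∈ ends e, (1 - ind ends (T.erase e) x i) = if x = i then 0 else 1 := by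
  split_ifs with hx
  · refine Finset.sum_eq_zero fun e _ => ?_
    simp [ind, hx, refl]
  · obtain ⟨e, ⟨he, hie, hex⟩, huniq⟩ := existsUnique_separating_edge hx hcard hT
    rw [Finset.sum_eq_single_of_mem e (by simp [he, hie])]
    · simp [ind, hex]
    · intro f hf hfe
      rw [Finset.mem_filter] at hf
      have : MGReach ends (T.erase f) x i := by
        by_contra h
        exact hfe (huniq f ⟨hf.1, hf.2, h⟩)
      simp [ind, this]

open scoped Classical in
/-- The unit flow from `j` to `r` along a spanning tree has divergence `1` at `j` and `0` at every
other vertex `i ≠ r`. -/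
theorem sum_ind_sub_ind [Fintype V] [DecidableEq V] {i r : V} (j : V) (hir : i ≠ r)
    (hcard : T.card = Fintype.card V - 1) (hT : ∀ u v, MGReach ends T u v) :
    ∑ e ∈ T with i ∈ ends e, (ind ends (T.erase e) j i - ind ends (T.erase e) r i) =
      if i = j then 1 else 0 := by
  have h1 := sum_one_sub_ind i j hcard hT
  have h2 := sum_one_sub_ind i r hcard hT
  rw [if_neg hir.symm] at h2
  calc _ = ∑ e ∈ T with i ∈ ends e, ((1 - ind ends (T.erase e) r i) -
        (1 - ind ends (T.erase e) j i)) := Finset.sum_congr rfl fun e _ => by ring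
    _ = _ := by
      rw [Finset.sum_sub_distrib, h1, h2]
      by_cases hij : i = j
      · simp [hij]
      · simp [hij, Ne.symm hij]

/-- `S` is the edge set of a spanning tree. -/
def IsTree [Fintype V] (ends : E → Sym2 V) (S : Finset E) : Prop :=
  S.card = Fintype.card V - 1 ∧ ∀ u v, MGReach ends S u v

/-- `S` is the edge set of a two-component spanning forest separating `r` from `j`. -/
def IsTwoForest [Fintype V] (ends : E → Sym2 V) (r j : V) (S : Finset E) : Prop :=
  S.card = Fintype.card V - 2 ∧ ¬ MGReach ends S r j ∧
    ∀ w, MGReach ends S w r ∨ MGReach ends S w j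

open scoped Classical in
/-- Adding an edge to a two-component forest gives a spanning tree exactly when the edge joins the
two components. -/
theorem ind_exchange [Fintype V] {e : E} {i k : V} (r j : V) (hik : i ≠ k)
    (hab : ends e = s(i, k)) (he : e ∉ S) :
    (if IsTwoForest ends r j S then ind ends S i j - ind ends S k j else 0) =
    if IsTree ends (insert e S) then ind ends S j i - ind ends S r i else 0 := by
  have hV : 1 < Fintype.card V := Fintype.one_lt_card_iff.2 ⟨i, k, hik⟩
  have : Nonempty V := ⟨i⟩
  simp only [IsTwoForest, IsTree, Finset.card_insert_of_notMem he, insert_connected_iff hab]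
  by_cases hc : S.card = Fintype.card V - 2
  · have hc' : S.card + 1 = Fintype.card V - 1 := by omega
    have hdis : ¬ ∀ u v, MGReach ends S u v := fun h => by
      have := card_le_card_add_one h
      omega
    have hs : ∀ u v, MGReach ends S u v → MGReach ends S v u := fun _ _ => symm
    have ht : ∀ u v w, MGReach ends S u v → MGReach ends S v w → MGReach ends S u w :=
      fun _ _ _ => trans
    simp only [hc', true_and, ind]
    simp only [hc, true_and]
    clear hc hc' hV hab he
    generalize MGReach ends S = R at *
    by_cases hF : ¬ R r j ∧ ∀ w, R w r ∨ R w j <;> by_cases hT : ∀ u, R u i ∨ R u k <;> grind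
  · have hc' : S.card + 1 ≠ Fintype.card V - 1 := by omega
    simp [hc, hc']

end MGReach

theorem Finset.sum_ite_mem_erase {E M : Type*} [Fintype E] [DecidableEq E] [AddCommMonoid M]
    (e : E) (g : Finset E → Finset E → M) :
    (∑ T : Finset E, if e ∈ T then g T (T.erase e) else 0) =
      ∑ S : Finset E, if e ∉ S then g (insert e S) S else 0 := by
  rw [← Finset.sum_filter, ← Finset.sum_filter]
  refine Finset.sum_nbij' (fun T => T.erase e) (fun S => insert e S) ?_ ?_ ?_ ?_ ?_ <;>
    simp +contextual [Finset.insert_erase]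

open scoped Classical in
theorem MGKappa_cast {V E : Type*} [Fintype V] [Fintype E] (ends : E → Sym2 V) :
    (MGKappa ends : ℚ) = ∑ T : Finset E, if MGReach.IsTree ends T then 1 else 0 := by
  rw [MGKappa, Nat.card_eq_fintype_card, Fintype.card_subtype, Finset.sum_boole]
  congr

open scoped Classical in
theorem MGKappaTwo_cast {V E : Type*} [Fintype V] [Fintype E] (ends : E → Sym2 V) (r k j : V) :
    (MGKappaTwo ends r k j : ℚ) = ∑ S : Finset E,
      if MGReach.IsTwoForest ends r j S then MGReach.ind ends S k j else 0 := by
  rw [MGKappaTwo, Nat.card_eq_fintype_card, Fintype.card_subtype, ← Finset.sum_boole]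
  refine Finset.sum_congr rfl fun S _ => ?_
  unfold MGReach.ind
  rw [← ite_and]
  refine if_congr ⟨?_, ?_⟩ rfl rfl
  · rintro ⟨hc, hkj, hrk, h⟩
    exact ⟨⟨hc, fun hrj => hrk (hrj.trans hkj.symm), fun w => (h w).imp_right (·.trans hkj)⟩, hkj⟩
  · rintro ⟨⟨hc, hrj, h⟩, hkj⟩
    exact ⟨hc, hkj, fun hrk => hrj (hrk.trans hkj), fun w => (h w).imp_right (·.trans hkj.symm)⟩

theorem MGKappa_pos {V E : Type*} [Fintype V] [Nonempty V] [Fintype E] {ends : E → Sym2 V}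
    (h : ∀ u v, MGReach ends Finset.univ u v) : 0 < MGKappa ends := by
  obtain ⟨T, hT⟩ := MGReach.exists_spanning_tree h
  have : Nonempty {S : Finset E // S.card = Fintype.card V - 1 ∧ ∀ u v, MGReach ends S u v} :=
    ⟨⟨T, hT⟩⟩
  exact Nat.card_pos

theorem MGKappaTwo_root {V E : Type*} [Fintype V] [Fintype E] (ends : E → Sym2 V) (r j : V) :
    MGKappaTwo ends r r j = 0 := by
  have : IsEmpty {S : Finset E // S.card = Fintype.card V - 2 ∧ MGReach ends S r j ∧
      ¬ MGReach ends S r r ∧ ∀ w, MGReach ends S w r ∨ MGReach ends S w r} :=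
    ⟨fun S => S.2.2.2.1 (MGReach.refl r)⟩
  exact Nat.card_of_isEmpty

theorem Sym2.sum_ite_eq_mk {V M : Type*} [Fintype V] [DecidableEq V] [AddCommMonoid M]
    (z : Sym2 V) (i : V) (c : M) :
    (∑ k, if z = s(i, k) then c else 0) = if i ∈ z then c else 0 := by
  split_ifs with h
  · obtain ⟨k, rfl⟩ := h
    simp only [Sym2.congr_right]
    simp
  · exact Finset.sum_eq_zero fun k _ => if_neg fun hk => h (by simp [hk])

open scoped Classical in
/-- The Kirchhoff current law for the two-component forest counts. -/
theorem sum_sum_ite_MGKappaTwo {V E : Type*} [Fintype V] [DecidableEq V] [Fintype E]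
    {ends : E → Sym2 V} (hloopless : ∀ e, ¬ (ends e).IsDiag) {i r : V} (j : V) (hir : i ≠ r) :
    (∑ e, ∑ k, if ends e = s(i, k)
      then (MGKappaTwo ends r i j : ℚ) - MGKappaTwo ends r k j else 0) =
    if i = j then (MGKappa ends : ℚ) else 0 := by
  have step : ∀ e k, ends e = s(i, k) →
      (MGKappaTwo ends r i j : ℚ) - MGKappaTwo ends r k j = ∑ T : Finset E, if e ∈ T then
        (if MGReach.IsTree ends T then
          MGReach.ind ends (T.erase e) j i - MGReach.ind ends (T.erase e) r i else 0) else 0 := by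
    intro e k hek
    have hik : i ≠ k := fun h => hloopless e (by rw [hek]; exact h)
    rw [Finset.sum_ite_mem_erase e fun T S => if MGReach.IsTree ends T then
          MGReach.ind ends S j i - MGReach.ind ends S r i else 0,
      MGKappaTwo_cast, MGKappaTwo_cast, ← Finset.sum_sub_distrib]
    refine Finset.sum_congr rfl fun S _ => ?_
    by_cases he : e ∈ S
    · have h := MGReach.of_edge he hek
      have : MGReach ends S i j ↔ MGReach ends S k j := ⟨h.symm.trans, h.trans⟩
      simp [MGReach.ind, this, he]
    · rw [if_pos he, ← MGReach.ind_exchange r j hik hek he]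
      split_ifs <;> simp
  calc _ = ∑ e, ∑ k, if ends e = s(i, k) then (∑ T : Finset E, if e ∈ T then
        (if MGReach.IsTree ends T then
          MGReach.ind ends (T.erase e) j i - MGReach.ind ends (T.erase e) r i else 0) else 0)
          else 0 :=
        Finset.sum_congr rfl fun e _ => Finset.sum_congr rfl fun k _ =>
          if_ctx_congr Iff.rfl (step e k) fun _ => rfl
    _ = ∑ e, ∑ T : Finset E, if i ∈ ends e then (if e ∈ T then (if MGReach.IsTree ends T then
          MGReach.ind ends (T.erase e) j i - MGReach.ind ends (T.erase e) r i else 0) else 0)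
          else 0 := by
        refine Finset.sum_congr rfl fun e _ => ?_
        rw [Sym2.sum_ite_eq_mk]
        split_ifs <;> simp
    _ = ∑ T : Finset E, if MGReach.IsTree ends T then (if i = j then 1 else 0) else 0 := by
        rw [Finset.sum_comm]
        refine Finset.sum_congr rfl fun T _ => ?_
        by_cases hT : MGReach.IsTree ends T
        · simp only [hT, if_true]
          rw [← MGReach.sum_ind_sub_ind j hir hT.1 hT.2, ← Finset.sum_filter,
            ← Finset.sum_filter, Finset.filter_filter]
          refine Finset.sum_congr ?_ fun _ _ => rfl
          ext e
          simp [and_comm]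
        · simp [hT]
    _ = _ := by
        rw [MGKappa_cast]
        split_ifs <;> simp

theorem laplacian_mulVec {V E : Type*} [Fintype V] [DecidableEq V] [Fintype E] {ends : E → Sym2 V}
    (hloopless : ∀ e, ¬ (ends e).IsDiag) (Δ : Matrix V V ℚ)
    (hΔ : ∀ i j, Δ i j =
      if i = j then (Nat.card {e : E // i ∈ ends e} : ℚ)
      else -(Nat.card {e : E // ends e = s(i, j)} : ℚ)) (f : V → ℚ) (i : V) :
    ∑ k, Δ i k * f k = ∑ e, ∑ k, if ends e = s(i, k) then f i - f k else 0 := by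
  classical
  have hentry : ∀ k, Δ i k = (if i = k then (∑ e, if i ∈ ends e then (1 : ℚ) else 0) else 0) -
      ∑ e, if ends e = s(i, k) then (1 : ℚ) else 0 := by
    intro k
    rw [hΔ]
    split_ifs with hik
    · have : ∀ e, ends e ≠ s(i, k) := fun e h => hloopless e (by rw [h]; exact hik)
      simp [this, Nat.card_eq_fintype_card, Fintype.card_subtype]
    · simp [Nat.card_eq_fintype_card, Fintype.card_subtype]
  have hsub : ∀ e k, (if ends e = s(i, k) then f i - f k else 0) =
      (if ends e = s(i, k) then f i else 0) - if ends e = s(i, k) then f k else 0 := by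
    intro e k
    split_ifs <;> simp
  simp only [hentry, hsub, sub_mul, Finset.sum_sub_distrib, Sym2.sum_ite_eq_mk]
  congr 1
  · simp only [ite_mul, zero_mul, Finset.sum_ite_eq, Finset.mem_univ, if_true, Finset.sum_mul,
      one_mul]
  · rw [Finset.sum_comm]
    simp only [ite_mul, zero_mul, one_mul, Finset.sum_mul]

theorem laplacian_inverse_entries (n : ℕ) (E : Type*) [Fintype E]
    (ends : E → Sym2 (Fin (n + 1)))
    (hloopless : ∀ e, ¬ (ends e).IsDiag)
    (hconn : ∀ u v : Fin (n + 1), MGReach ends Finset.univ u v)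
    (Δ : Matrix (Fin (n + 1)) (Fin (n + 1)) ℚ)
    (hΔ : ∀ i j, Δ i j =
      if i = j then (Nat.card {e : E // i ∈ ends e} : ℚ)
      else -(Nat.card {e : E // ends e = s(i, j)} : ℚ))
    (Δt : Matrix (Fin n) (Fin n) ℚ)
    (hΔt : ∀ i j, Δt i j = Δ i.succ j.succ)
    (i j : Fin n) :
    Δt⁻¹ i j = (MGKappaTwo ends 0 i.succ j.succ : ℚ) / (MGKappa ends : ℚ) := by
  have hpos : (MGKappa ends : ℚ) ≠ 0 := by exact_mod_cast (MGKappa_pos hconn).ne'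
  have key : Δt * Matrix.of (fun a b : Fin n =>
      (MGKappaTwo ends 0 a.succ b.succ : ℚ) / (MGKappa ends : ℚ)) = 1 := by
    ext a b
    have h1 := laplacian_mulVec hloopless Δ hΔ
      (fun k => (MGKappaTwo ends 0 k b.succ : ℚ)) a.succ
    rw [sum_sum_ite_MGKappaTwo hloopless b.succ (Fin.succ_ne_zero a), Fin.sum_univ_succ,
      MGKappaTwo_root] at h1
    simp only [Nat.cast_zero, mul_zero, zero_add, Fin.succ_inj] at h1
    simp only [Matrix.mul_apply, Matrix.of_apply, hΔt, Matrix.one_apply, ← mul_div_assoc]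
    rw [← Finset.sum_div, h1]
    split_ifs <;> simp [hpos]
  rw [Matrix.inv_eq_right_inv key, Matrix.of_apply]
end

section
/- For every n ≥ 6, there is no element D of 2A (the set of sums of two elements of A) in ℤ/F_{2n}ℤ such that D - x lies in 2A for every x in A, where A = {F_k·F_{2n-k} mod F_{2n} : 0 ≤ k ≤ n}. -/
/-- The partial sums of the divisor `(p) + (q) + (r)` on the vertices `0, 1, 2, …`. -/
def chipsUpTo (p q r i : ℕ) : ℕ :=
  (if p ≤ i then 1 else 0) + (if q ≤ i then 1 else 0) + (if r ≤ i then 1 else 0)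

lemma chipsUpTo_le_three (p q r i : ℕ) : chipsUpTo p q r i ≤ 3 := by
  unfold chipsUpTo; split_ifs <;> omega

lemma chipsUpTo_mono (p q r : ℕ) : Monotone (chipsUpTo p q r) := by
  intro i j hij
  unfold chipsUpTo; split_ifs <;> omega

lemma chipsUpTo_eq_three {p q r n : ℕ} (hp : p ≤ n) (hq : q ≤ n) (hr : r ≤ n) :
    chipsUpTo p q r n = 3 := by
  simp [chipsUpTo, hp, hq, hr]

lemma one_le_chipsUpTo (q r i : ℕ) : 1 ≤ chipsUpTo 0 q r i := by
  unfold chipsUpTo; split_ifs <;> omega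

lemma chipsUpTo_lt_succ (q r i : ℕ) : chipsUpTo (i + 1) q r i < chipsUpTo (i + 1) q r (i + 1) := by
  unfold chipsUpTo; split_ifs <;> omega

/-- The class of the vertex `k` of the strip graph, as an integer. -/
def stripClass (n k : ℕ) : ℤ := Nat.fib k * Nat.fib (2 * n - k)

lemma fib_mul_fib_sub_fib_mul_fib (i m : ℕ) :
    (Nat.fib (i + 1) * Nat.fib (i + 1 + m) - Nat.fib i * Nat.fib (i + m + 2) : ℤ) =
      (-1) ^ i * Nat.fib (m + 1) := by
  induction i with
  | zero => simp [Nat.fib_one, add_comm]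
  | succ i ih =>
    have h₁ : Nat.fib (i + 1 + 1) = Nat.fib i + Nat.fib (i + 1) := Nat.fib_add_two
    have h₂ : Nat.fib (i + 1 + m + 2) = Nat.fib (i + 1 + m) + Nat.fib (i + m + 2) := by
      rw [Nat.fib_add_two, show i + 1 + m + 1 = i + m + 2 by ring]
    rw [h₁, h₂, show i + 1 + 1 + m = i + m + 2 by ring, pow_succ]
    push_cast
    linear_combination -ih

lemma stripClass_succ_sub (i j : ℕ) :
    stripClass (i + (j + 1)) (i + 1) - stripClass (i + (j + 1)) i =
      (-1) ^ i * Nat.fib (2 * j + 1) := by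
  unfold stripClass
  rw [show 2 * (i + (j + 1)) - (i + 1) = i + 1 + 2 * j by omega,
    show 2 * (i + (j + 1)) - i = i + 2 * j + 2 by omega]
  exact fib_mul_fib_sub_fib_mul_fib i (2 * j)

lemma sum_indicator_mul_stripClass_sub {n p : ℕ} (hp : p ≤ n) :
    ∑ i ∈ Finset.range n, ((if p ≤ i then 1 else 0 : ℕ) : ℤ) *
      (stripClass n i - stripClass n (i + 1)) = stripClass n p - stripClass n n := by
  have key : ∀ m, p ≤ m → ∑ i ∈ Finset.range m, ((if p ≤ i then 1 else 0 : ℕ) : ℤ) *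
      (stripClass n i - stripClass n (i + 1)) = stripClass n p - stripClass n m := by
    intro m hm
    induction m, hm using Nat.le_induction with
    | base =>
      rw [sub_self]
      refine Finset.sum_eq_zero fun i hi => ?_
      simp [Finset.mem_range.1 hi]
    | succ m hm ih =>
      rw [Finset.sum_range_succ, ih]
      simp [hm]
  exact key n hp

lemma sum_chipsUpTo_mul_stripClass_sub {n p q r : ℕ} (hp : p ≤ n) (hq : q ≤ n) (hr : r ≤ n) :
    ∑ i ∈ Finset.range n, (chipsUpTo p q r i : ℤ) * (stripClass n i - stripClass n (i + 1)) =
      stripClass n p + stripClass n q + stripClass n r - 3 * stripClass n n := by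
  simp only [chipsUpTo, Nat.cast_add, add_mul, Finset.sum_add_distrib]
  rw [sum_indicator_mul_stripClass_sub hp, sum_indicator_mul_stripClass_sub hq,
    sum_indicator_mul_stripClass_sub hr]
  ring

/-- The solution of `x i + 3 * x (i + 1) + x (i + 2) = C i` starting with `-m, m`. -/
def edgeDrops (C : ℕ → ℤ) (m : ℤ) : ℕ → ℤ
  | 0 => -m
  | 1 => m
  | i + 2 => C i - 3 * edgeDrops C m (i + 1) - edgeDrops C m i

lemma sum_mul_stripClass_sub (C : ℕ → ℤ) (m : ℤ) {n : ℕ} (i j : ℕ) (h : i + j = n) :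
    ∑ k ∈ Finset.range i, C k * (stripClass n k - stripClass n (k + 1)) =
      (-1) ^ i * ((edgeDrops C m (i + 1) + edgeDrops C m i) * Nat.fib (2 * j + 1) -
        edgeDrops C m i * Nat.fib (2 * j)) - m * Nat.fib (2 * n) := by
  induction i generalizing j with
  | zero =>
    obtain rfl : j = n := by omega
    simp [edgeDrops]
  | succ i ih =>
    obtain rfl : n = i + (j + 1) := by omega
    rw [Finset.sum_range_succ, ih (j + 1) rfl]
    have h₁ := stripClass_succ_sub i j
    have h₂ : Nat.fib (2 * (j + 1)) = Nat.fib (2 * j) + Nat.fib (2 * j + 1) := Nat.fib_add_two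
    have h₃ : Nat.fib (2 * (j + 1) + 1) = Nat.fib (2 * j + 1) + Nat.fib (2 * (j + 1)) :=
      Nat.fib_add_two
    have h₄ : edgeDrops C m (i + 1 + 1) = C i - 3 * edgeDrops C m (i + 1) - edgeDrops C m i := rfl
    rw [h₄, h₃, h₂, pow_succ]
    push_cast
    linear_combination -C i * h₁

/-- A divisor of degree zero on the strip graph with trivial class is the Laplacian of a function;
`C` are the partial sums of the divisor and `x (i + 1)` is the drop of that function along the edge
from `i` to `i + 1`. -/
lemma exists_edgeDrops {n : ℕ} (C : ℕ → ℤ)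
    (h : (Nat.fib (2 * n) : ℤ) ∣
      ∑ k ∈ Finset.range n, C k * (stripClass n k - stripClass n (k + 1))) :
    ∃ x : ℕ → ℤ, x 0 = -x 1 ∧ x (n + 1) = -x n ∧
      ∀ i, x i + 3 * x (i + 1) + x (i + 2) = C i := by
  obtain ⟨m, hm⟩ := h
  refine ⟨edgeDrops C (-m), by simp [edgeDrops], ?_, fun i => ?_⟩
  · have key := sum_mul_stripClass_sub C (-m) n 0 (add_zero n)
    rw [hm] at key
    have : (-1 : ℤ) ^ n * (edgeDrops C (-m) (n + 1) + edgeDrops C (-m) n) = 0 := by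
      simp at key
      linarith
    have := (mul_eq_zero.1 this).resolve_left (by simp)
    linarith
  · simp only [edgeDrops]
    ring

lemma abs_le_of_boundary {n : ℕ} (hn : 1 ≤ n) {B : ℤ} {C x : ℕ → ℤ} (hC : ∀ i, |C i| ≤ B)
    (h₀ : x 0 = -x 1) (hend : x (n + 1) = -x n)
    (hx : ∀ i, x i + 3 * x (i + 1) + x (i + 2) = C i) {i : ℕ} (hi : i ≤ n + 1) : |x i| ≤ B := by
  obtain ⟨k, hk, hmax⟩ := Finset.exists_max_image (Finset.range n) (fun k => |x (k + 1)|)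
    ⟨0, Finset.mem_range.2 hn⟩
  have hk := Finset.mem_range.1 hk
  have bound : ∀ l ≤ n + 1, |x l| ≤ |x (k + 1)| := by
    intro l hl
    rcases Nat.eq_zero_or_pos l with rfl | hl₀
    · rw [h₀, abs_neg]
      exact hmax 0 (Finset.mem_range.2 hn)
    · obtain ⟨l, rfl⟩ : ∃ l', l = l' + 1 := ⟨l - 1, by omega⟩
      rcases Nat.lt_or_ge l n with h | h
      · exact hmax l (Finset.mem_range.2 h)
      · obtain rfl : l = n := by omega
        rw [hend, abs_neg]
        obtain ⟨l', rfl⟩ : ∃ l', l = l' + 1 := ⟨l - 1, by omega⟩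
        exact hmax l' (Finset.mem_range.2 (by omega))
  have h₁ := abs_le.1 (bound k (by omega))
  have h₂ := abs_le.1 (bound (k + 2) (by omega))
  have h₃ := abs_le.1 (bound i hi)
  have h₄ := abs_le.1 (hC k)
  have h₅ := hx k
  rw [abs_le]
  rcases abs_cases (x (k + 1)) with h | h <;> rw [h.1] at h₁ h₂ h₃ <;> omega

/-- The codes `10 * (x i + 3) + (x (i + 1) + 3)` of the values `x i, x (i + 1)` that are possible
when `P i = P₀` and `Q i = Q₀`. Here `P` and `Q` are monotone sequences with final value `3`, and
`x` is a solution of `x i + 3 * x (i + 1) + x (i + 2) = P i - Q i` that takes values in `[-3, 3]`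
and ends with `e, -e`. -/
def admissibleCodes : ℕ → ℕ → List ℕ
  | 0, 0 => [4, 14, 23, 24, 33, 42, 43, 52, 62]
  | 0, 1 => [4, 13, 14, 23, 33, 42, 52, 61, 62]
  | 0, 2 => [4, 13, 23, 32, 42, 51, 52, 61]
  | 0, 3 => [3, 13, 22, 32, 41, 42, 51, 60, 61]
  | 1, 0 => [4, 5, 14, 24, 33, 43, 52, 53, 62]
  | 1, 1 => [4, 14, 23, 33, 43, 52, 62]
  | 1, 2 => [4, 23, 33, 42, 52, 61]
  | 1, 3 => [13, 23, 32, 42, 51, 61]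
  | 2, 0 => [5, 14, 15, 24, 34, 43, 53, 62]
  | 2, 1 => [5, 14, 24, 33, 43, 62]
  | 2, 2 => [4, 14, 33, 52, 62]
  | 2, 3 => [4, 23, 42, 52, 61]
  | 3, 0 => [5, 6, 15, 24, 25, 34, 44, 53, 63]
  | 3, 1 => [5, 15, 24, 34, 43, 53]
  | 3, 2 => [5, 14, 24, 43, 62]
  | 3, 3 => [6, 14, 15, 24, 33, 42, 51, 52, 60]
  | _, _ => []

/-- The values `x i + 3 = a`, `x (i + 1) + 3 = b`, `P i = P₀` and `Q i = Q₀` are possible, in the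
sense of `admissibleCodes`. -/
def Admissible (a b P₀ Q₀ : ℕ) : Prop := 10 * a + b ∈ admissibleCodes P₀ Q₀

instance (a b P₀ Q₀ : ℕ) : Decidable (Admissible a b P₀ Q₀) :=
  inferInstanceAs (Decidable (_ ∈ _))

lemma admissible_end : ∀ a < 7, ∀ b < 7, a + b = 6 → Admissible a b 3 3 := by
  decide +kernel

lemma admissible_of_step : ∀ P₁ ∈ List.range 4, ∀ Q₁ ∈ List.range 4, ∀ b ∈ List.range 7,
    ∀ c ∈ List.range 7, Admissible b c P₁ Q₁ →
    ∀ P₀ ∈ List.range (P₁ + 1), ∀ Q₀ ∈ List.range (Q₁ + 1), ∀ a ∈ List.range 7,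
    a + 3 * b + c + Q₀ = P₀ + 15 → Admissible a b P₀ Q₀ := by
  decide +kernel

/-- The values `P₀, Q₀` of `P i, Q i` allow the values `b, c, P₁, Q₁` of
`x (i + 1) + 3, x (i + 2) + 3, P (i + 1), Q (i + 1)`. -/
def Advance (P₀ Q₀ b c P₁ Q₁ : ℕ) : Prop :=
  P₀ ≤ P₁ ∧ Q₀ ≤ Q₁ ∧ Admissible b c P₁ Q₁

instance (P₀ Q₀ b c P₁ Q₁ : ℕ) : Decidable (Advance P₀ Q₀ b c P₁ Q₁) :=
  inferInstanceAs (Decidable (_ ∧ _ ∧ _))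

set_option synthInstance.maxHeartbeats 400000 in
set_option synthInstance.maxSize 2000 in
lemma advance_six :
    ∀ z₀ ∈ List.range 7, ∀ z₁ ∈ List.range 7, z₀ + z₁ = 6 →
    ∀ P₀ ∈ List.range 4, 1 ≤ P₀ → ∀ Q₀ ∈ List.range 4, Admissible z₀ z₁ P₀ Q₀ →
    ∀ z₂ ∈ List.range 7, z₀ + 3 * z₁ + z₂ + Q₀ = P₀ + 15 →
    ∀ P₁ ∈ List.range 4, ∀ Q₁ ∈ List.range 4, Advance P₀ Q₀ z₁ z₂ P₁ Q₁ →
    ∀ z₃ ∈ List.range 7, z₁ + 3 * z₂ + z₃ + Q₁ = P₁ + 15 →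
    ∀ P₂ ∈ List.range 4, ∀ Q₂ ∈ List.range 4, Advance P₁ Q₁ z₂ z₃ P₂ Q₂ →
    ∀ z₄ ∈ List.range 7, z₂ + 3 * z₃ + z₄ + Q₂ = P₂ + 15 →
    ∀ P₃ ∈ List.range 4, ∀ Q₃ ∈ List.range 4, Advance P₂ Q₂ z₃ z₄ P₃ Q₃ →
    ∀ z₅ ∈ List.range 7, z₃ + 3 * z₄ + z₅ + Q₃ = P₃ + 15 →
    ∀ P₄ ∈ List.range 4, ∀ Q₄ ∈ List.range 4, Advance P₃ Q₃ z₄ z₅ P₄ Q₄ →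
    ∀ z₆ ∈ List.range 7, z₄ + 3 * z₅ + z₆ + Q₄ = P₄ + 15 →
    ∀ P₅ ∈ List.range 4, ∀ Q₅ ∈ List.range 4, Advance P₄ Q₄ z₅ z₆ P₅ Q₅ →
    ∀ z₇ ∈ List.range 7, z₅ + 3 * z₆ + z₇ + Q₅ = P₅ + 15 →
    ∀ P₆ ∈ List.range 4, ∀ Q₆ ∈ List.range 4, Advance P₅ Q₅ z₆ z₇ P₆ Q₆ →
    (Q₀ < Q₁ → P₂ = P₃ ∨ P₄ = P₅) ∧ (Q₂ < Q₃ → P₂ < P₃ ∨ P₂ = 3) ∧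
      (Q₄ < Q₅ → P₄ < P₅ ∨ P₅ = 1) := by
  decide +kernel

lemma admissible_of_final {n : ℕ} {P Q z : ℕ → ℕ} (hP : Monotone P) (hQ : Monotone Q)
    (hPn : P n = 3) (hQn : Q n = 3) (hz : ∀ i ≤ n + 1, z i < 7) (hend : z n + z (n + 1) = 6)
    (hstep : ∀ i < n, z i + 3 * z (i + 1) + z (i + 2) + Q i = P i + 15) {i : ℕ} (hi : i ≤ n) :
    Admissible (z i) (z (i + 1)) (P i) (Q i) := by
  induction hi using Nat.decreasingInduction with
  | of_succ k hk ih =>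
    have hP₃ : P (k + 1) ≤ 3 := hPn ▸ hP hk
    have hQ₃ : Q (k + 1) ≤ 3 := hQn ▸ hQ hk
    have hz' : ∀ l ≤ n + 1, z l ∈ List.range 7 := fun l hl => List.mem_range.2 (hz l hl)
    exact admissible_of_step _ (List.mem_range.2 (Nat.lt_succ_of_le hP₃))
      _ (List.mem_range.2 (Nat.lt_succ_of_le hQ₃)) _ (hz' _ (by omega)) _ (hz' _ (by omega)) ih
      _ (List.mem_range.2 (Nat.lt_succ_of_le (hP k.le_succ)))
      _ (List.mem_range.2 (Nat.lt_succ_of_le (hQ k.le_succ))) _ (hz' _ (by omega)) (hstep k hk)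
  | self =>
    rw [hPn, hQn]
    exact admissible_end _ (hz _ (by omega)) _ (hz _ le_rfl) hend

/-- The divisors `(0) + (p) + (q)` and `(x) + (i) + (j)` being equivalent restricts their partial
sums at the first vertices. -/
lemma chipsUpTo_of_equiv {n p q x i j : ℕ} (hn : 6 ≤ n) (hp : p ≤ n) (hq : q ≤ n) (hx : x ≤ n)
    (hi : i ≤ n) (hj : j ≤ n)
    (h : (Nat.fib (2 * n) : ℤ) ∣ stripClass n p + stripClass n q -
      (stripClass n x + stripClass n i + stripClass n j)) :
    let P := chipsUpTo 0 p q
    let Q := chipsUpTo x i j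
    (Q 0 < Q 1 → P 2 = P 3 ∨ P 4 = P 5) ∧ (Q 2 < Q 3 → P 2 < P 3 ∨ P 2 = 3) ∧
      (Q 4 < Q 5 → P 4 < P 5 ∨ P 5 = 1) := by
  intro P Q
  obtain ⟨y, hy₀, hyn, hy⟩ := exists_edgeDrops (n := n) (fun k => (P k : ℤ) - Q k) (by
    simp only [sub_mul, Finset.sum_sub_distrib]
    rw [sum_chipsUpTo_mul_stripClass_sub (Nat.zero_le n) hp hq,
      sum_chipsUpTo_mul_stripClass_sub hx hi hj]
    convert h using 1
    simp [stripClass])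
  have hbound : ∀ l ≤ n + 1, |y l| ≤ 3 := fun l hl =>
    abs_le_of_boundary (by omega) (fun k => by
      have h₁ := chipsUpTo_le_three 0 p q k
      have h₂ := chipsUpTo_le_three x i j k
      rw [abs_le]
      simp only [P, Q]
      omega) hy₀ hyn hy hl
  have hP : Monotone P := chipsUpTo_mono 0 p q
  have hQ : Monotone Q := chipsUpTo_mono x i j
  obtain ⟨z, hz⟩ : ∃ z : ℕ → ℕ, ∀ l ≤ n + 1, (z l : ℤ) = y l + 3 :=
    ⟨fun l => (y l + 3).toNat, fun l hl => Int.toNat_of_nonneg (by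
      have := abs_le.1 (hbound l hl)
      omega)⟩
  have hz₇ : ∀ l ≤ n + 1, z l < 7 := fun l hl => by
    have h₁ := abs_le.1 (hbound l hl)
    have h₂ := hz l hl
    omega
  have hstep : ∀ l < n, z l + 3 * z (l + 1) + z (l + 2) + Q l = P l + 15 := fun l hl => by
    have h₁ := hz l (by omega)
    have h₂ := hz (l + 1) (by omega)
    have h₃ := hz (l + 2) (by omega)
    have h₄ := hy l
    omega
  have hz₀ : z 0 + z 1 = 6 := by
    have h₁ := hz 0 (by omega)
    have h₂ := hz 1 (by omega)
    omega
  have hzn : z n + z (n + 1) = 6 := by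
    have h₁ := hz n (by omega)
    have h₂ := hz (n + 1) le_rfl
    omega
  have adm : ∀ l ≤ n, Admissible (z l) (z (l + 1)) (P l) (Q l) := fun l hl =>
    admissible_of_final hP hQ (chipsUpTo_eq_three (Nat.zero_le n) hp hq)
      (chipsUpTo_eq_three hx hi hj) hz₇ hzn hstep hl
  have adv : ∀ l < n, Advance (P l) (Q l) (z (l + 1)) (z (l + 2)) (P (l + 1)) (Q (l + 1)) :=
    fun l hl => ⟨hP l.le_succ, hQ l.le_succ, adm (l + 1) hl⟩
  have hzr : ∀ l ≤ 7, z l ∈ List.range 7 := fun l hl => List.mem_range.2 (hz₇ l (by omega))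
  have hPr : ∀ l, P l ∈ List.range 4 := fun l =>
    List.mem_range.2 (Nat.lt_succ_of_le (chipsUpTo_le_three 0 p q l))
  have hQr : ∀ l, Q l ∈ List.range 4 := fun l =>
    List.mem_range.2 (Nat.lt_succ_of_le (chipsUpTo_le_three x i j l))
  exact advance_six _ (hzr 0 (by norm_num)) _ (hzr 1 (by norm_num)) hz₀
    _ (hPr 0) (one_le_chipsUpTo p q 0) _ (hQr 0) (adm 0 (by omega))
    _ (hzr 2 (by norm_num)) (hstep 0 (by omega)) _ (hPr 1) _ (hQr 1) (adv 0 (by omega))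
    _ (hzr 3 (by norm_num)) (hstep 1 (by omega)) _ (hPr 2) _ (hQr 2) (adv 1 (by omega))
    _ (hzr 4 (by norm_num)) (hstep 2 (by omega)) _ (hPr 3) _ (hQr 3) (adv 2 (by omega))
    _ (hzr 5 (by norm_num)) (hstep 3 (by omega)) _ (hPr 4) _ (hQr 4) (adv 3 (by omega))
    _ (hzr 6 (by norm_num)) (hstep 4 (by omega)) _ (hPr 5) _ (hQr 5) (adv 4 (by omega))
    _ (hzr 7 (by norm_num)) (hstep 5 (by omega)) _ (hPr 6) _ (hQr 6) (adv 5 (by omega))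

theorem strip_gonality_ge_four (n : ℕ) (hn : 6 ≤ n) :
    ¬ ∃ D ∈ {y : ZMod (Nat.fib (2 * n)) |
        ∃ a ∈ {z : ZMod (Nat.fib (2 * n)) | ∃ k ≤ n, z = (Nat.fib k * Nat.fib (2 * n - k) : ℕ)},
        ∃ b ∈ {z : ZMod (Nat.fib (2 * n)) | ∃ k ≤ n, z = (Nat.fib k * Nat.fib (2 * n - k) : ℕ)},
          y = a + b},
      ∀ x ∈ {z : ZMod (Nat.fib (2 * n)) | ∃ k ≤ n, z = (Nat.fib k * Nat.fib (2 * n - k) : ℕ)},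
        D - x ∈ {y : ZMod (Nat.fib (2 * n)) |
          ∃ a ∈ {z : ZMod (Nat.fib (2 * n)) | ∃ k ≤ n, z = (Nat.fib k * Nat.fib (2 * n - k) : ℕ)},
          ∃ b ∈ {z : ZMod (Nat.fib (2 * n)) | ∃ k ≤ n, z = (Nat.fib k * Nat.fib (2 * n - k) : ℕ)},
            y = a + b} := by
  rintro ⟨D, ⟨_, ⟨p, hp, rfl⟩, _, ⟨q, hq, rfl⟩, hD⟩, hall⟩
  have equiv : ∀ x ≤ n, ∃ i ≤ n, ∃ j ≤ n, (Nat.fib (2 * n) : ℤ) ∣ stripClass n p + stripClass n q -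
      (stripClass n x + stripClass n i + stripClass n j) := by
    intro x hx
    obtain ⟨_, ⟨i, hi, rfl⟩, _, ⟨j, hj, rfl⟩, h⟩ := hall _ ⟨x, hx, rfl⟩
    refine ⟨i, hi, j, hj, (ZMod.intCast_zmod_eq_zero_iff_dvd _ _).1 ?_⟩
    rw [hD] at h
    simp only [stripClass]
    push_cast at h ⊢
    linear_combination h
  obtain ⟨i₁, hi₁, j₁, hj₁, h₁⟩ := equiv 1 (by omega)
  obtain ⟨i₃, hi₃, j₃, hj₃, h₃⟩ := equiv 3 (by omega)
  obtain ⟨i₅, hi₅, j₅, hj₅, h₅⟩ := equiv 5 (by omega)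
  have c₁ := (chipsUpTo_of_equiv hn hp hq (by omega) hi₁ hj₁ h₁).1 (chipsUpTo_lt_succ i₁ j₁ 0)
  have c₃ := (chipsUpTo_of_equiv hn hp hq (by omega) hi₃ hj₃ h₃).2.1
    (chipsUpTo_lt_succ i₃ j₃ 2)
  have c₅ := (chipsUpTo_of_equiv hn hp hq (by omega) hi₅ hj₅ h₅).2.2
    (chipsUpTo_lt_succ i₅ j₅ 4)
  have b₂ := one_le_chipsUpTo p q 2
  have b₅ := chipsUpTo_le_three 0 p q 5
  have m₂ := chipsUpTo_mono 0 p q (show 2 ≤ 3 by norm_num)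
  have m₃ := chipsUpTo_mono 0 p q (show 3 ≤ 4 by norm_num)
  have m₄ := chipsUpTo_mono 0 p q (show 4 ≤ 5 by norm_num)
  omega
end
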